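/- arXiv:2504.15410 — 3 statements merged into one kernel-verified Lean document; each statement's English description precedes it below -/
import Mathlib

section
/- Let n ≥ 1 be a natural number, p ∈ [0,1] a real number, and k a natural number with k ≤ n·p. Then Σ_{j=0}^{k} (n choose j) · pʲ · (1−p)^{n−j} ≤ exp(−2n(p − k/n)²). -/
/-! Chernoff's method. For `t ≤ 0` each term with `j ≤ k` is multiplied by `exp (t * (j - k)) ≥ 1`,
and the sum is extended to all `j ≤ n`; by the binomial theorem the result is
`exp (-t * k) * (p * exp t + (1 - p)) ^ n`. Hoeffding's lemma for a Bernoulli variable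
(`bernoulli_mgf_le`) bounds this by `exp (n * (t * (p - k / n) + t ^ 2 / 8))`, whose minimum over
`t` is attained at `t = -4 * (p - k / n)`. -/

open MeasureTheory ProbabilityTheory in
/-- Hoeffding's lemma for a Bernoulli variable, uncentred. -/
lemma bernoulli_mgf_le (p : ℝ) (hp : p ∈ Set.Icc (0 : ℝ) 1) (t : ℝ) :
    p * Real.exp t + (1 - p) ≤ Real.exp (t * p + t ^ 2 / 8) := by
  obtain ⟨h0, h1⟩ := hp
  have h1' : 0 ≤ 1 - p := by linarith
  let μ : Measure ℝ :=
    ENNReal.ofReal p • Measure.dirac 1 + ENNReal.ofReal (1 - p) • Measure.dirac 0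
  have hμ : IsProbabilityMeasure μ := ⟨by
    simp [μ, ← ENNReal.ofReal_add h0 h1']⟩
  have hint (f : ℝ → ℝ) : ∫ x, f x ∂μ = p * f 1 + (1 - p) * f 0 := by
    have hi (a c : ℝ) : Integrable f (ENNReal.ofReal c • Measure.dirac a) :=
      (integrable_dirac (by simp)).smul_measure ENNReal.ofReal_ne_top
    rw [integral_add_measure (hi _ _) (hi _ _)]
    simp [integral_smul_measure, h0, h1']
  have hae : ∀ᵐ x ∂μ, (fun x : ℝ => x) x ∈ Set.Icc (0 : ℝ) 1 := by
    rw [ae_add_measure_iff]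
    constructor <;> apply Measure.ae_smul_measure <;> simp [ae_dirac_eq]
  have h := (hasSubgaussianMGF_of_mem_Icc (μ := μ) (X := fun x : ℝ => x)
    measurable_id.aemeasurable hae).mgf_le t
  rw [mgf, hint, hint] at h
  simp only [mul_one, mul_zero, add_zero, zero_sub, sub_zero] at h
  have hc : ((((‖(1 : ℝ)‖₊ / 2) ^ 2 : NNReal)) : ℝ) * t ^ 2 / 2 = t ^ 2 / 8 := by
    simp; ring
  rw [hc] at h
  -- Undo the centring by multiplying through by `exp (t * p)`.
  calc p * Real.exp t + (1 - p)
      = Real.exp (t * p) * (p * Real.exp (t * (1 - p)) + (1 - p) * Real.exp (t * -p)) := by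
        rw [mul_add, mul_left_comm, mul_left_comm _ (1 - p), ← Real.exp_add, ← Real.exp_add]
        ring_nf
        simp only [Real.exp_zero]
        ring
    _ ≤ Real.exp (t * p) * Real.exp (t ^ 2 / 8) := by gcongr
    _ = _ := by rw [← Real.exp_add]

/-- Hoeffding's inequality for the lower tail of a binomial distribution:
if `X ∼ Binomial(n, p)` then `Pr(X ≤ k) ≤ exp(−2n(p − k/n)²)` for `k ≤ np`. -/
theorem stmt_4 (n : ℕ) (hn : 1 ≤ n) (p : ℝ) (hp : p ∈ Set.Icc (0 : ℝ) 1)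
    (k : ℕ) (hk : (k : ℝ) ≤ (n : ℝ) * p) :
    ∑ j ∈ Finset.range (k + 1), (n.choose j : ℝ) * p ^ j * (1 - p) ^ (n - j) ≤
      Real.exp (-2 * (n : ℝ) * (p - (k : ℝ) / (n : ℝ)) ^ 2) := by
  have hn0 : (0 : ℝ) < n := by exact_mod_cast hn
  have h0 : 0 ≤ p := hp.1
  have h1 : 0 ≤ 1 - p := sub_nonneg.2 hp.2
  have hkn : k ≤ n := by
    have : (k : ℝ) ≤ n := hk.trans (mul_le_of_le_one_right hn0.le hp.2)
    exact_mod_cast this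
  have hd : 0 ≤ p - (k : ℝ) / n := by
    rw [sub_nonneg, div_le_iff₀ hn0]; linarith
  obtain ⟨t, ht⟩ : ∃ t : ℝ, t = -4 * (p - (k : ℝ) / n) := ⟨_, rfl⟩
  have ht0 : t ≤ 0 := by linarith
  calc ∑ j ∈ Finset.range (k + 1), (n.choose j : ℝ) * p ^ j * (1 - p) ^ (n - j)
      ≤ ∑ j ∈ Finset.range (k + 1),
          Real.exp (t * (j - k)) * ((n.choose j : ℝ) * p ^ j * (1 - p) ^ (n - j)) := by
        refine Finset.sum_le_sum fun j hj => le_mul_of_one_le_left (by positivity) ?_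
        have hjk : (j : ℝ) ≤ k := by exact_mod_cast Finset.mem_range_succ_iff.1 hj
        exact Real.one_le_exp (mul_nonneg_of_nonpos_of_nonpos ht0 (by linarith))
    _ ≤ ∑ j ∈ Finset.range (n + 1),
          Real.exp (t * (j - k)) * ((n.choose j : ℝ) * p ^ j * (1 - p) ^ (n - j)) :=
        Finset.sum_le_sum_of_subset_of_nonneg
          (Finset.range_subset_range.2 (by omega)) fun _ _ _ => by positivity
    _ = Real.exp (-t * k) * (p * Real.exp t + (1 - p)) ^ n := by
        rw [add_pow, Finset.mul_sum]
        refine Finset.sum_congr rfl fun j _ => ?_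
        have : Real.exp (t * (j - k)) = Real.exp (-t * k) * Real.exp t ^ j := by
          rw [← Real.exp_nat_mul, ← Real.exp_add]; ring_nf
        rw [this, mul_pow]; ring
    _ ≤ Real.exp (-t * k) * Real.exp (t * p + t ^ 2 / 8) ^ n := by
        gcongr
        exact bernoulli_mgf_le p hp t
    _ = _ := by
        rw [← Real.exp_nat_mul, ← Real.exp_add, ht]
        congr 1
        field_simp
        ring
end

section
/- Let E = EuclideanSpace ℝ (Fin d), let μ > 0, and let f : E → ℝ be differentiable and μ-strongly convex on E (i.e., x ↦ f(x) − (μ/2)‖x‖² is convex). Suppose f attains a global minimum value f* at some point x* ∈ E (so f* ≤ f(x) for all x). Then for every x ∈ E, 2μ·(f(x) − f*) ≤ ‖∇f(x)‖², where ∇f denotes the gradient of f. -/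
/-!
Convexity of `g = f - (μ/2)‖·‖²` along the line from `x` to `y` puts `g` above its tangent at `x`,
which rearranges to `f y ≥ f x + ⟪∇f x, y - x⟫ + (μ/2)‖y - x‖²`. At `y = x*` the right-hand side is
at least its minimum over `y`, namely `f x - ‖∇f x‖² / (2μ)`; this is the expansion of
`0 ≤ ‖∇f x + μ (x* - x)‖²`.
-/

/-- A differentiable strongly convex function lies above its tangent paraboloids. -/
lemma strong_convex_lower_bound {d : ℕ} (μ : ℝ)
    (f : EuclideanSpace ℝ (Fin d) → ℝ) (hdiff : Differentiable ℝ f)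
    (hconv : ConvexOn ℝ Set.univ (fun x => f x - (μ / 2) * ‖x‖ ^ 2))
    (x y : EuclideanSpace ℝ (Fin d)) :
    f x + inner ℝ (gradient f x) (y - x) + μ / 2 * ‖y - x‖ ^ 2 ≤ f y := by
  have hline : ConvexOn ℝ Set.univ
      ((fun z => f z - (μ / 2) * ‖z‖ ^ 2) ∘ (AffineMap.lineMap x y : ℝ →ᵃ[ℝ] _)) := by
    simpa using hconv.comp_affineMap (AffineMap.lineMap x y : ℝ →ᵃ[ℝ] _)
  have hl : HasDerivAt (AffineMap.lineMap x y : ℝ → EuclideanSpace ℝ (Fin d)) (y - x) 0 :=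
    AffineMap.hasDerivAt_lineMap
  have hf : HasDerivAt (fun t : ℝ => f (AffineMap.lineMap x y t))
      (inner ℝ (gradient f x) (y - x)) 0 := by
    have hgrad := (hdiff (AffineMap.lineMap x y (0 : ℝ))).hasGradientAt.hasFDerivAt
    have hcomp := hgrad.comp_hasDerivAt (0 : ℝ) hl
    rw [AffineMap.lineMap_apply_zero] at hcomp
    exact hcomp
  have hder := hf.sub (hl.norm_sq.const_mul (μ / 2))
  have hslope := hline.le_slope_of_hasDerivAt (Set.mem_univ 0) (Set.mem_univ 1) one_pos hder
  simp only [slope_def_field, Function.comp_apply, AffineMap.lineMap_apply_zero,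
    AffineMap.lineMap_apply_one, sub_zero, div_one] at hslope
  have hnorm : ‖y‖ ^ 2 = ‖x‖ ^ 2 + 2 * inner ℝ x (y - x) + ‖y - x‖ ^ 2 := by
    rw [← norm_add_sq_real, add_sub_cancel]
  rw [hnorm] at hslope
  linarith

/-- Polyak–Łojasiewicz inequality for differentiable `μ`-strongly convex functions:
`2μ(f(x) − f*) ≤ ‖∇f(x)‖²` for all `x`. -/
theorem stmt_6 {d : ℕ} (μ : ℝ) (hμ : 0 < μ)
    (f : EuclideanSpace ℝ (Fin d) → ℝ) (hdiff : Differentiable ℝ f)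
    (hconv : ConvexOn ℝ Set.univ (fun x => f x - (μ / 2) * ‖x‖ ^ 2))
    (xstar : EuclideanSpace ℝ (Fin d)) (hmin : ∀ x, f xstar ≤ f x) :
    ∀ x, 2 * μ * (f x - f xstar) ≤ ‖gradient f x‖ ^ 2 := by
  intro x
  have hlow := strong_convex_lower_bound μ f hdiff hconv x xstar
  have hsq : 0 ≤ ‖gradient f x + μ • (xstar - x)‖ ^ 2 := sq_nonneg _
  rw [norm_add_sq_real, inner_smul_right, norm_smul, mul_pow, Real.norm_eq_abs, sq_abs] at hsq
  have hscaled := mul_le_mul_of_nonneg_left hlow (by positivity : 0 ≤ 2 * μ)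
  linarith
end

section
/- Let E = EuclideanSpace ℝ (Fin d), let L > 0, α > 0, and 0 ≤ e, and let f : E → ℝ be differentiable with L-Lipschitz gradient (‖∇f(x) − ∇f(y)‖ ≤ L‖x − y‖ for all x, y). Fix θ ∈ E and let ĝ = ∇f(θ) + ν where ν ∈ E satisfies |νᵢ| ≤ e·|(∇f(θ))ᵢ| for every coordinate i. Then f(θ − α·ĝ) − f(θ) ≤ −α·((1 − e) − (αL/2)·(1 + e)²)·‖∇f(θ)‖². -/
/-!
The descent lemma for functions with `L`-Lipschitz gradient bounds the change of `f` along a step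
`v` by `⟪∇f θ, v⟫ + L/2 ‖v‖²`; it follows by comparing derivatives along the segment from `θ` to
`θ + v`. The coordinatewise bound on the perturbation gives `‖ν‖ ≤ e ‖∇f θ‖`, hence
`⟪∇f θ, ν⟫ ≥ -e ‖∇f θ‖²` by Cauchy-Schwarz and `‖∇f θ + ν‖ ≤ (1 + e) ‖∇f θ‖`. Taking
`v = -α (∇f θ + ν)` in the descent lemma yields the estimate.
-/

/-- The descent lemma: a function with `L`-Lipschitz gradient lies below its quadratic upper
model. -/
lemma descent_lemma {E : Type*} [NormedAddCommGroup E] [InnerProductSpace ℝ E] [CompleteSpace E]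
    {L : ℝ} {f : E → ℝ} (hdiff : Differentiable ℝ f)
    (hLip : ∀ x y, ‖gradient f x - gradient f y‖ ≤ L * ‖x - y‖) (x v : E) :
    f (x + v) ≤ f x + inner ℝ (gradient f x) v + L / 2 * ‖v‖ ^ 2 := by
  have hline : ∀ t : ℝ, HasDerivAt (fun t : ℝ => f (x + t • v))
      (inner ℝ (gradient f (x + t • v)) v) t := by
    intro t
    have h1 : HasDerivAt (fun t : ℝ => x + t • v) v t := by
      simpa using ((hasDerivAt_id t).smul_const v).const_add x
    have h2 := (hdiff (x + t • v)).hasGradientAt.hasFDerivAt.comp_hasDerivAt t h1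
    exact h2.congr_deriv (InnerProductSpace.toDual_apply_apply ..)
  have hmodel : ∀ t : ℝ, HasDerivAt
      (fun t : ℝ => f x + t * inner ℝ (gradient f x) v + L / 2 * ‖v‖ ^ 2 * t ^ 2)
      (inner ℝ (gradient f x) v + L * ‖v‖ ^ 2 * t) t := by
    intro t
    have h := (((hasDerivAt_id t).mul_const (inner ℝ (gradient f x) v)).const_add (f x)).add
      (((hasDerivAt_id t).pow 2).const_mul (L / 2 * ‖v‖ ^ 2))
    refine h.congr_deriv ?_
    simp
    ring
  have key := image_le_of_deriv_right_le_deriv_boundary (a := 0) (b := 1)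
    (fun t _ => (hline t).continuousAt.continuousWithinAt)
    (fun t _ => (hline t).hasDerivWithinAt) (by simp)
    (fun t _ => (hmodel t).continuousAt.continuousWithinAt)
    (fun t _ => (hmodel t).hasDerivWithinAt)
    (fun t ht => by
      have h1 := real_inner_le_norm (gradient f (x + t • v) - gradient f x) v
      have h2 := hLip (x + t • v) x
      rw [add_sub_cancel_left, norm_smul, Real.norm_of_nonneg ht.1] at h2
      have h3 := mul_le_mul_of_nonneg_right h2 (norm_nonneg v)
      rw [inner_sub_left] at h1
      linarith)
    (Set.right_mem_Icc.2 zero_le_one)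
  simpa using key

lemma norm_le_of_abs_coord_le {d : ℕ} {e : ℝ} (he : 0 ≤ e) {g ν : EuclideanSpace ℝ (Fin d)}
    (hν : ∀ i, |ν i| ≤ e * |g i|) : ‖ν‖ ≤ e * ‖g‖ := by
  refine (sq_le_sq₀ (norm_nonneg _) (by positivity)).1 ?_
  rw [mul_pow, EuclideanSpace.norm_sq_eq, EuclideanSpace.norm_sq_eq, Finset.mul_sum]
  refine Finset.sum_le_sum fun i _ => ?_
  rw [← mul_pow]
  exact pow_le_pow_left₀ (norm_nonneg _) (hν i) 2

/-- One-step descent estimate along a corrupted gradient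
`ghat = ∇f(θ) + ν` with coordinatewise relative error at most `e`:
`f(θ − αghat) − f(θ) ≤ −α((1 − e) − (αL/2)(1 + e)²)‖∇f(θ)‖²`. -/
theorem stmt_10 {d : ℕ} (L α e : ℝ) (hL : 0 < L) (hα : 0 < α) (he : 0 ≤ e)
    (f : EuclideanSpace ℝ (Fin d) → ℝ) (hdiff : Differentiable ℝ f)
    (hLip : ∀ x y, ‖gradient f x - gradient f y‖ ≤ L * ‖x - y‖)
    (θ : EuclideanSpace ℝ (Fin d))
    (ν : EuclideanSpace ℝ (Fin d)) (hν : ∀ i, |ν i| ≤ e * |gradient f θ i|)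
    (ghat : EuclideanSpace ℝ (Fin d)) (hghat : ghat = gradient f θ + ν) :
    f (θ - α • ghat) - f θ ≤
      -α * ((1 - e) - (α * L / 2) * (1 + e) ^ 2) * ‖gradient f θ‖ ^ 2 := by
  have hnorm := norm_le_of_abs_coord_le he hν
  have hdesc := descent_lemma hdiff hLip θ (-(α • ghat))
  rw [← sub_eq_add_neg, norm_neg, norm_smul, Real.norm_of_nonneg hα.le, inner_neg_right,
    real_inner_smul_right, hghat, inner_add_right, real_inner_self_eq_norm_sq] at hdesc
  rw [hghat]
  set g := gradient f θ
  have hinner : -(e * ‖g‖ ^ 2) ≤ inner ℝ g ν := by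
    have h1 := (abs_le.1 (abs_real_inner_le_norm g ν)).1
    have h2 := mul_le_mul_of_nonneg_left hnorm (norm_nonneg g)
    linarith
  have hsq : ‖g + ν‖ ^ 2 ≤ ((1 + e) * ‖g‖) ^ 2 :=
    pow_le_pow_left₀ (norm_nonneg _) (by linarith [norm_add_le g ν]) 2
  have h1 := mul_le_mul_of_nonneg_left hinner hα.le
  have h2 := mul_le_mul_of_nonneg_left hsq (by positivity : 0 ≤ L / 2 * α ^ 2)
  linarith
end
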